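/- Let X_1, …, X_n be upper extended negatively dependent random variables in a sub-linear expectation space with dominating constant K ≥ 1 and 𝔼[X_k] ≤ 0 for each k. Set S_n = Σ_{k=1}^n X_k and B_n = Σ_{k=1}^n 𝔼[X_k²]. Then for any p ≥ 2 there is a constant C_p (depending only on p and K) such that C_𝕍[(S_n⁺)^p] ≤ p^p·C_𝕍[(max_{k≤n} X_k⁺)^p] + C_p·B_n^{p/2} ≤ p^p·Σ_{k=1}^n C_𝕍[(X_k⁺)^p] + C_p·B_n^{p/2}. -/

import Mathlib

open Filter MeasureTheory
open scoped ENNReal NNReal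

noncomputable section

/-- A sub-linear expectation on `Ω`: a monotone, constant-preserving, sub-additive,
positively homogeneous functional on real random variables (with values in the
extended reals, so that random variables without a finite expectation are allowed). -/
structure SublinearExp (Ω : Type) where
  E : (Ω → ℝ) → EReal
  mono : ∀ X Y : Ω → ℝ, (∀ ω, X ω ≤ Y ω) → E X ≤ E Y
  const_eq : ∀ c : ℝ, E (fun _ => c) = (c : EReal)
  subadd : ∀ X Y : Ω → ℝ, E (fun ω => X ω + Y ω) ≤ E X + E Y
  pos_homog : ∀ lam : ℝ, 0 ≤ lam → ∀ X : Ω → ℝ,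
    E (fun ω => lam * X ω) = (lam : EReal) * E X

namespace SublinearExp

variable {Ω : Type}

/-- The conjugate expectation `ℰ[X] := −𝔼[−X]`. -/
def cE (SL : SublinearExp Ω) (X : Ω → ℝ) : EReal := - SL.E fun ω => - X ω

/-- The upper capacity `𝕍(A) := inf{𝔼[ξ] : 1_A ≤ ξ}`. -/
def V (SL : SublinearExp Ω) (A : Set Ω) : ℝ :=
  sInf {x : ℝ | ∃ ξ : Ω → ℝ,
    (∀ ω, A.indicator (fun _ => (1 : ℝ)) ω ≤ ξ ω) ∧ SL.E ξ = (x : EReal)}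

/-- The lower capacity `𝓋(A) := 1 − 𝕍(Aᶜ)`. -/
def vLow (SL : SublinearExp Ω) (A : Set Ω) : ℝ := 1 - SL.V Aᶜ

/-- The Choquet integral `C_𝕍(X) := ∫₀^∞ 𝕍(X ≥ t) dt` (of a non-negative r.v.). -/
def Choquet (SL : SublinearExp Ω) (X : Ω → ℝ) : ℝ≥0∞ :=
  ∫⁻ t in Set.Ioi (0 : ℝ), ENNReal.ofReal (SL.V {ω | t ≤ X ω})

/-- The outer capacity `𝕍*(A) := inf{Σ_n 𝕍(A_n) : A ⊆ ∪_n A_n}`. -/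
def Vout (SL : SublinearExp Ω) (A : Set Ω) : ℝ≥0∞ :=
  ⨅ (B : ℕ → Set Ω) (_ : A ⊆ ⋃ n, B n), ∑' n, ENNReal.ofReal (SL.V (B n))

/-- The upper capacity is continuous: continuous from below and from above. -/
def ContinuousCapacity (SL : SublinearExp Ω) : Prop :=
  (∀ A : ℕ → Set Ω, Monotone A →
    Tendsto (fun n => SL.V (A n)) atTop (nhds (SL.V (⋃ n, A n)))) ∧
  (∀ A : ℕ → Set Ω, Antitone A →
    Tendsto (fun n => SL.V (A n)) atTop (nhds (SL.V (⋂ n, A n))))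

/-- Bounded Lipschitz function on ℝ. -/
def IsBLip (g : ℝ → ℝ) : Prop :=
  (∃ L : NNReal, LipschitzWith L g) ∧ ∃ M : ℝ, ∀ x, |g x| ≤ M

/-- Local Lipschitz function on ℝ: `|φ(x) − φ(y)| ≤ C(1+|x|^m+|y|^m)|x−y|`. -/
def IsLocLip (φ : ℝ → ℝ) : Prop :=
  ∃ (C : ℝ) (m : ℕ), ∀ x y : ℝ, |φ x - φ y| ≤ C * (1 + |x| ^ m + |y| ^ m) * |x - y|

/-- Upper extended negative dependence (finite family) with dominating constant `K`:
`𝔼[∏ g_i(X_i)] ≤ K ∏ 𝔼[g_i(X_i)]` for all non-negative bounded Lipschitz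
non-decreasing `g_i`.  (Expectations of bounded functions are finite, whence
the `toReal`.) -/
def UENDFin (SL : SublinearExp Ω) (K : ℝ) {n : ℕ} (X : Fin n → Ω → ℝ) : Prop :=
  ∀ g : Fin n → ℝ → ℝ, (∀ i, IsBLip (g i)) → (∀ i, Monotone (g i)) →
    (∀ i x, 0 ≤ g i x) →
    SL.E (fun ω => ∏ i, g i (X i ω)) ≤
      ((K * ∏ i, (SL.E fun ω => g i (X i ω)).toReal : ℝ) : EReal)

/-- Upper extended negative dependence for a sequence. -/
def UEND (SL : SublinearExp Ω) (K : ℝ) (X : ℕ → Ω → ℝ) : Prop :=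
  ∀ n : ℕ, ∀ g : ℕ → ℝ → ℝ, (∀ i, IsBLip (g i)) → (∀ i, Monotone (g i)) →
    (∀ i x, 0 ≤ g i x) →
    SL.E (fun ω => ∏ i ∈ Finset.range n, g i (X i ω)) ≤
      ((K * ∏ i ∈ Finset.range n, (SL.E fun ω => g i (X i ω)).toReal : ℝ) : EReal)

/-- Lower extended negative dependence for a sequence. -/
def LEND (SL : SublinearExp Ω) (K : ℝ) (X : ℕ → Ω → ℝ) : Prop :=
  ∀ n : ℕ, ∀ g : ℕ → ℝ → ℝ, (∀ i, IsBLip (g i)) → (∀ i, Antitone (g i)) →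
    (∀ i x, 0 ≤ g i x) →
    SL.E (fun ω => ∏ i ∈ Finset.range n, g i (X i ω)) ≤
      ((K * ∏ i ∈ Finset.range n, (SL.E fun ω => g i (X i ω)).toReal : ℝ) : EReal)

/-- Extended negative dependence = upper and lower END. -/
def END (SL : SublinearExp Ω) (K : ℝ) (X : ℕ → Ω → ℝ) : Prop :=
  UEND SL K X ∧ LEND SL K X

/-- Upper extended negative dependence under the conjugate expectation `ℰ`
(finite family). -/
def UENDFinConj (SL : SublinearExp Ω) (K : ℝ) {n : ℕ} (X : Fin n → Ω → ℝ) : Prop :=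
  ∀ g : Fin n → ℝ → ℝ, (∀ i, IsBLip (g i)) → (∀ i, Monotone (g i)) →
    (∀ i x, 0 ≤ g i x) →
    SL.cE (fun ω => ∏ i, g i (X i ω)) ≤
      ((K * ∏ i, (SL.cE fun ω => g i (X i ω)).toReal : ℝ) : EReal)

/-- Upper extended negative dependence under the conjugate expectation (sequence). -/
def UENDconj (SL : SublinearExp Ω) (K : ℝ) (X : ℕ → Ω → ℝ) : Prop :=
  ∀ n : ℕ, ∀ g : ℕ → ℝ → ℝ, (∀ i, IsBLip (g i)) → (∀ i, Monotone (g i)) →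
    (∀ i x, 0 ≤ g i x) →
    SL.cE (fun ω => ∏ i ∈ Finset.range n, g i (X i ω)) ≤
      ((K * ∏ i ∈ Finset.range n, (SL.cE fun ω => g i (X i ω)).toReal : ℝ) : EReal)

/-- Lower extended negative dependence under the conjugate expectation (sequence). -/
def LENDconj (SL : SublinearExp Ω) (K : ℝ) (X : ℕ → Ω → ℝ) : Prop :=
  ∀ n : ℕ, ∀ g : ℕ → ℝ → ℝ, (∀ i, IsBLip (g i)) → (∀ i, Antitone (g i)) →
    (∀ i x, 0 ≤ g i x) →
    SL.cE (fun ω => ∏ i ∈ Finset.range n, g i (X i ω)) ≤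
      ((K * ∏ i ∈ Finset.range n, (SL.cE fun ω => g i (X i ω)).toReal : ℝ) : EReal)

/-- Extended negative dependence under the conjugate expectation. -/
def ENDconj (SL : SublinearExp Ω) (K : ℝ) (X : ℕ → Ω → ℝ) : Prop :=
  UENDconj SL K X ∧ LENDconj SL K X

/-- Extended independence of a sequence:
`𝔼[∏ ψ_i(X_i)] = ∏ 𝔼[ψ_i(X_i)]` for non-negative local Lipschitz `ψ_i`,
whenever the expectations involved are finite. -/
def ExtIndep (SL : SublinearExp Ω) (X : ℕ → Ω → ℝ) : Prop :=
  ∀ n : ℕ, ∀ ψ : ℕ → ℝ → ℝ, (∀ i, IsLocLip (ψ i)) → (∀ i x, 0 ≤ ψ i x) →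
    (∀ i ∈ Finset.range n, SL.E (fun ω => ψ i (X i ω)) ≠ ⊤) →
    SL.E (fun ω => ∏ i ∈ Finset.range n, ψ i (X i ω)) =
      ((∏ i ∈ Finset.range n, (SL.E fun ω => ψ i (X i ω)).toReal : ℝ) : EReal)

/-- Extended independence of two random variables. -/
def ExtIndepPair (SL : SublinearExp Ω) (Y Z : Ω → ℝ) : Prop :=
  ∀ ψ₁ ψ₂ : ℝ → ℝ, IsLocLip ψ₁ → IsLocLip ψ₂ →
    (∀ x, 0 ≤ ψ₁ x) → (∀ x, 0 ≤ ψ₂ x) →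
    SL.E (fun ω => ψ₁ (Y ω)) ≠ ⊤ → SL.E (fun ω => ψ₂ (Z ω)) ≠ ⊤ →
    SL.E (fun ω => ψ₁ (Y ω) * ψ₂ (Z ω)) =
      (((SL.E fun ω => ψ₁ (Y ω)).toReal * (SL.E fun ω => ψ₂ (Z ω)).toReal : ℝ) : EReal)

/-- Identically distributed: `𝔼[φ(X_i)] = 𝔼[φ(X_1)]` for all local Lipschitz `φ`. -/
def IdentDist (SL : SublinearExp Ω) (X : ℕ → Ω → ℝ) : Prop :=
  ∀ (i : ℕ) (φ : ℝ → ℝ), IsLocLip φ →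
    SL.E (fun ω => φ (X i ω)) = SL.E fun ω => φ (X 0 ω)

end SublinearExp

/-- `log x = ln(x ∨ e)`. -/
def paperLog (x : ℝ) : ℝ := Real.log (max x (Real.exp 1))

/-- `a_n = √(2 n log log n)` with the above convention for `log`. -/
def lilA (n : ℕ) : ℝ := Real.sqrt (2 * n * paperLog (paperLog n))

/-- The second-order remainder quotient `(exp u - 1 - u) / u ^ 2` is non-decreasing. -/
lemma Real.exp_le_one_add_add_sq_mul_div {u v : ℝ} (hv : 0 < v) (huv : u ≤ v) :
    Real.exp u ≤ 1 + u + u ^ 2 * ((Real.exp v - 1 - v) / v ^ 2) := by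
  have hv2 : 0 < v ^ 2 := by positivity
  rcases le_total u 0 with hu | hu
  · have h_half : 1 / 2 ≤ (Real.exp v - 1 - v) / v ^ 2 := by
      rw [le_div_iff₀ hv2]
      linarith [Real.quadratic_le_exp_of_nonneg hv.le]
    have h_neg := Real.quadratic_le_exp_of_nonneg (neg_nonneg.mpr hu)
    have h_mul : Real.exp u * Real.exp (-u) = 1 := by rw [← Real.exp_add]; simp
    have h_pos := Real.exp_pos u
    have h_exp : Real.exp u ≤ 1 + u + u ^ 2 / 2 := by
      have h_le : Real.exp u * (1 + -u + (-u) ^ 2 / 2) ≤ 1 :=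
        (mul_le_mul_of_nonneg_left h_neg h_pos.le).trans_eq h_mul
      have h_denom : 0 < 1 + -u + (-u) ^ 2 / 2 := by nlinarith
      rw [← le_div_iff₀ h_denom] at h_le
      refine h_le.trans ?_
      rw [div_le_iff₀ h_denom]
      nlinarith [sq_nonneg (u ^ 2)]
    nlinarith [sq_nonneg u]
  · have h_series : ∀ w : ℝ,
        HasSum (fun n : ℕ => w ^ (n + 2) / (n + 2).factorial) (Real.exp w - 1 - w) := by
      intro w
      have h := NormedSpace.expSeries_div_hasSum_exp w
      rw [← Real.exp_eq_exp_ℝ, ← hasSum_nat_add_iff' 2] at h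
      convert! h using 1
      simp [Finset.sum_range_succ]
      ring
    have h_le : v ^ 2 * (Real.exp u - 1 - u) ≤ u ^ 2 * (Real.exp v - 1 - v) := by
      refine hasSum_le (fun n => ?_) ((h_series u).mul_left _) ((h_series v).mul_left _)
      have h_pow : u ^ n ≤ v ^ n := pow_le_pow_left₀ hu huv n
      calc v ^ 2 * (u ^ (n + 2) / (n + 2).factorial)
          = (v ^ 2 * u ^ 2 / (n + 2).factorial) * u ^ n := by ring
        _ ≤ (v ^ 2 * u ^ 2 / (n + 2).factorial) * v ^ n := by gcongr
        _ = u ^ 2 * (v ^ (n + 2) / (n + 2).factorial) := by ring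
    have h_div : Real.exp u - 1 - u ≤ u ^ 2 * ((Real.exp v - 1 - v) / v ^ 2) := by
      rw [mul_div_assoc', le_div_iff₀ hv2]
      linarith
    linarith

/-- Exponential of a truncated variable, bounded by a quadratic polynomial of the variable. -/
lemma Real.exp_mul_min_le {h y x : ℝ} (hh : 0 < h) (hy : 0 < y) :
    Real.exp (h * min x y) ≤ 1 + (h * x + (Real.exp (h * y) - 1) / y ^ 2 * x ^ 2) := by
  have hhy : 0 < h * y := mul_pos hh hy
  have h_base := Real.exp_le_one_add_add_sq_mul_div (u := h * min x y) hhy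
    (mul_le_mul_of_nonneg_left (min_le_right x y) hh.le)
  have h_sq : (min x y) ^ 2 ≤ x ^ 2 := by
    rcases le_total x y with hxy | hxy
    · rw [min_eq_left hxy]
    · rw [min_eq_right hxy]
      exact pow_le_pow_left₀ hy.le hxy 2
  have h_coef : (h * min x y) ^ 2 * ((Real.exp (h * y) - 1 - h * y) / (h * y) ^ 2) =
      (Real.exp (h * y) - 1 - h * y) / y ^ 2 * (min x y) ^ 2 := by
    field_simp
  have h_num : 0 ≤ Real.exp (h * y) - 1 := by linarith [Real.add_one_le_exp (h * y)]
  have h_quad : (Real.exp (h * y) - 1 - h * y) / y ^ 2 * (min x y) ^ 2 ≤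
      (Real.exp (h * y) - 1) / y ^ 2 * x ^ 2 := by
    have h_sub : Real.exp (h * y) - 1 - h * y ≤ Real.exp (h * y) - 1 := by linarith
    gcongr
  have h_lin : h * min x y ≤ h * x := mul_le_mul_of_nonneg_left (min_le_left x y) hh.le
  linarith

namespace SublinearExp

variable {Ω : Type}

lemma isBLip_exp_mul_min {h : ℝ} (hh : 0 < h) (y : ℝ) :
    IsBLip fun x => Real.exp (h * min x y) := by
  have h_le : ∀ x, Real.exp (h * min x y) ≤ Real.exp (h * y) := fun x =>
    Real.exp_le_exp.mpr (mul_le_mul_of_nonneg_left (min_le_right x y) hh.le)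
  refine ⟨⟨⟨Real.exp (h * y) * h, by positivity⟩, LipschitzWith.of_le_add_mul _ fun x z => ?_⟩,
    Real.exp (h * y), fun x => by rw [abs_of_pos (Real.exp_pos _)]; exact h_le x⟩
  have h_add : Real.exp (h * min z y) =
      Real.exp (h * min x y) * Real.exp (h * min z y - h * min x y) := by
    rw [← Real.exp_add]
    ring_nf
  have h_tangent := mul_le_mul_of_nonneg_left
    (Real.add_one_le_exp (h * min z y - h * min x y)) (Real.exp_pos (h * min x y)).le
  have h_min : min x y - min z y ≤ dist x z := by
    rw [Real.dist_eq]
    have := abs_min_sub_min_le_max x y z y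
    simp only [sub_self, abs_zero] at this
    rw [max_eq_left (abs_nonneg _)] at this
    exact (le_abs_self _).trans this
  have h_prod : Real.exp (h * min x y) * (h * (min x y - min z y)) ≤
      Real.exp (h * y) * (h * dist x z) :=
    (mul_le_mul_of_nonneg_left (mul_le_mul_of_nonneg_left h_min hh.le) (Real.exp_pos _).le).trans
      (mul_le_mul_of_nonneg_right (h_le x) (by positivity))
  change Real.exp (h * min x y) ≤ Real.exp (h * min z y) + Real.exp (h * y) * h * dist x z
  nlinarith

lemma E_ne_bot (SL : SublinearExp Ω) (X : Ω → ℝ) : SL.E X ≠ ⊥ := by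
  intro hX
  have h := SL.subadd X fun ω => -X ω
  simp only [add_neg_cancel, hX, EReal.bot_add, SL.const_eq] at h
  exact EReal.coe_ne_bot 0 (le_bot_iff.mp h)

lemma E_nonneg (SL : SublinearExp Ω) {X : Ω → ℝ} (hX : ∀ ω, 0 ≤ X ω) : 0 ≤ SL.E X := by
  have h := SL.mono (fun _ => 0) X hX
  rwa [SL.const_eq] at h

lemma zero_mem_lowerBounds_V (SL : SublinearExp Ω) (A : Set Ω) :
    0 ∈ lowerBounds {x : ℝ | ∃ ξ : Ω → ℝ,
      (∀ ω, A.indicator (fun _ => (1 : ℝ)) ω ≤ ξ ω) ∧ SL.E ξ = (x : EReal)} := by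
  rintro x ⟨ξ, hξ, hx⟩
  have h := SL.E_nonneg (X := ξ) fun ω =>
    (Set.indicator_nonneg (fun _ _ => zero_le_one) ω).trans (hξ ω)
  rw [hx] at h
  exact_mod_cast h

lemma V_le_of_E_le (SL : SublinearExp Ω) {A : Set Ω} {ξ : Ω → ℝ} {x : ℝ}
    (hξ : ∀ ω, A.indicator (fun _ => (1 : ℝ)) ω ≤ ξ ω) (hx : SL.E ξ ≤ x) : SL.V A ≤ x := by
  have h_top : SL.E ξ ≠ ⊤ := ne_top_of_le_ne_top (EReal.coe_ne_top x) hx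
  have h_coe := EReal.coe_toReal h_top (SL.E_ne_bot ξ)
  refine (csInf_le ⟨0, SL.zero_mem_lowerBounds_V A⟩ ⟨ξ, hξ, h_coe.symm⟩).trans ?_
  rw [← h_coe] at hx
  exact_mod_cast hx

lemma V_nonneg (SL : SublinearExp Ω) (A : Set Ω) : 0 ≤ SL.V A :=
  Real.sInf_nonneg (SL.zero_mem_lowerBounds_V A)

lemma V_le_one (SL : SublinearExp Ω) (A : Set Ω) : SL.V A ≤ 1 :=
  SL.V_le_of_E_le (ξ := fun _ => 1)
    (fun ω => Set.indicator_le_self' (fun _ _ => zero_le_one) ω) (SL.const_eq 1).le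

lemma exists_E_le_of_V_lt (SL : SublinearExp Ω) {A : Set Ω} {x : ℝ} (hx : SL.V A < x) :
    ∃ ξ : Ω → ℝ, (∀ ω, A.indicator (fun _ => (1 : ℝ)) ω ≤ ξ ω) ∧ SL.E ξ ≤ x := by
  unfold V at hx
  obtain ⟨y, ⟨ξ, hξ, hy⟩, hyx⟩ := exists_lt_of_csInf_lt (by
    exact ⟨1, fun _ => 1, fun ω => Set.indicator_le_self' (fun _ _ => zero_le_one) ω,
      SL.const_eq 1⟩) hx
  exact ⟨ξ, hξ, by rw [hy]; exact_mod_cast hyx.le⟩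

lemma V_mono (SL : SublinearExp Ω) {A B : Set Ω} (hAB : A ⊆ B) : SL.V A ≤ SL.V B := by
  refine le_of_forall_gt_imp_ge_of_dense fun x hx => ?_
  obtain ⟨ξ, hξ, hE⟩ := SL.exists_E_le_of_V_lt hx
  exact SL.V_le_of_E_le (fun ω =>
    (Set.indicator_le_indicator_of_subset hAB (fun _ => zero_le_one) ω).trans (hξ ω)) hE

lemma V_union_le (SL : SublinearExp Ω) (A B : Set Ω) : SL.V (A ∪ B) ≤ SL.V A + SL.V B := by
  refine le_of_forall_pos_le_add fun ε hε => ?_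
  obtain ⟨ξ, hξ, hEξ⟩ := SL.exists_E_le_of_V_lt (show SL.V A < SL.V A + ε / 2 by linarith)
  obtain ⟨η, hη, hEη⟩ := SL.exists_E_le_of_V_lt (show SL.V B < SL.V B + ε / 2 by linarith)
  have h_sum : SL.E (fun ω => ξ ω + η ω) ≤
      ((SL.V A + ε / 2 + (SL.V B + ε / 2) : ℝ) : EReal) := by
    rw [EReal.coe_add]
    exact (SL.subadd ξ η).trans (add_le_add hEξ hEη)
  refine (SL.V_le_of_E_le (fun ω => ?_) h_sum).trans (by linarith)
  have hξω := hξ ω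
  have hηω := hη ω
  by_cases hA : ω ∈ A <;> by_cases hB : ω ∈ B <;> simp_all <;> linarith

lemma V_empty (SL : SublinearExp Ω) : SL.V ∅ = 0 :=
  le_antisymm (SL.V_le_of_E_le (ξ := fun _ => 0) (by simp) (SL.const_eq 0).le) (SL.V_nonneg ∅)

lemma V_iUnion_le (SL : SublinearExp Ω) {ι : Type*} (s : Finset ι) (A : ι → Set Ω) :
    SL.V (⋃ i ∈ s, A i) ≤ ∑ i ∈ s, SL.V (A i) := by
  classical
  induction s using Finset.induction_on with
  | empty => simp [V_empty]
  | insert i s hi ih =>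
    rw [Finset.set_biUnion_insert, Finset.sum_insert hi]
    exact (SL.V_union_le _ _).trans (by gcongr)

lemma measurable_V_le (SL : SublinearExp Ω) (X : Ω → ℝ) :
    Measurable fun t : ℝ => ENNReal.ofReal (SL.V {ω | t ≤ X ω}) := by
  refine Antitone.measurable fun s t hst => ENNReal.ofReal_le_ofReal (SL.V_mono fun ω hω => ?_)
  exact hst.trans hω

lemma Choquet_iSup_rpow_le (SL : SublinearExp Ω) {n : ℕ} (X : Fin n → Ω → ℝ) {p : ℝ}
    (hp : 0 < p) :
    SL.Choquet (fun ω => (⨆ k, max (X k ω) 0) ^ p) ≤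
      ∑ k, SL.Choquet fun ω => (max (X k ω) 0) ^ p := by
  unfold Choquet
  rw [← lintegral_finsetSum _ fun k _ => SL.measurable_V_le _]
  refine setLIntegral_mono' measurableSet_Ioi fun t ht => ?_
  rw [← ENNReal.ofReal_sum_of_nonneg fun k _ => SL.V_nonneg _]
  refine ENNReal.ofReal_le_ofReal (le_trans (SL.V_mono fun ω hω => ?_)
    (SL.V_iUnion_le Finset.univ fun k => {ω | t ≤ (max (X k ω) 0) ^ p}))
  replace hω : t ≤ (⨆ k, max (X k ω) 0) ^ p := hω
  rcases isEmpty_or_nonempty (Fin n) with hn | hn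
  · rw [Real.iSup_of_isEmpty, Real.zero_rpow hp.ne'] at hω
    exact absurd hω (not_le.mpr ht)
  · obtain ⟨k, hk⟩ := exists_eq_ciSup_of_finite (f := fun k => max (X k ω) 0)
    rw [← hk] at hω
    simp only [Finset.mem_univ, Set.iUnion_true, Set.mem_iUnion]
    exact ⟨k, hω⟩

/-- Change of variables in the Choquet integral. -/
lemma lintegral_V_div (SL : SublinearExp Ω) (X : Ω → ℝ) {a : ℝ} (ha : 0 < a) :
    ∫⁻ t in Set.Ioi (0 : ℝ), ENNReal.ofReal (SL.V {ω | t / a ≤ X ω}) =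
      ENNReal.ofReal a * SL.Choquet X := by
  unfold Choquet
  have h_meas : Measurable fun t : ℝ => ENNReal.ofReal (SL.V {ω | t / a ≤ X ω}) :=
    (SL.measurable_V_le X).comp (measurable_id.div_const a)
  rw [← lintegral_indicator measurableSet_Ioi, ← lintegral_indicator measurableSet_Ioi]
  nth_rewrite 1 [← Real.smul_map_volume_mul_left ha.ne']
  rw [lintegral_smul_measure, lintegral_map (h_meas.indicator measurableSet_Ioi)
    (measurable_const_mul a), abs_of_pos ha, smul_eq_mul]
  congr 1
  refine lintegral_congr fun t => ?_
  simp only [Set.indicator, Set.mem_Ioi, mul_pos_iff_of_pos_left ha, mul_div_cancel_left₀ t ha.ne']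

/-- Exponential Markov inequality for sums of truncated variables. -/
lemma V_sum_min_le_exp (SL : SublinearExp Ω) {K : ℝ} (hK : 0 ≤ K) {n : ℕ} {X : Fin n → Ω → ℝ}
    (hX : UENDFin SL K X) (hmean : ∀ k, SL.E (X k) ≤ 0) {b : Fin n → ℝ}
    (hb : ∀ k, SL.E (fun ω => (X k ω) ^ 2) = b k) {h y : ℝ} (hh : 0 < h) (hy : 0 < y) (x : ℝ) :
    SL.V {ω | x ≤ ∑ k, min (X k ω) y} ≤
      K * Real.exp (-(h * x) + (Real.exp (h * y) - 1) / y ^ 2 * ∑ k, b k) := by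
  set c : ℝ := (Real.exp (h * y) - 1) / y ^ 2
  have hc : 0 ≤ c := div_nonneg (by linarith [Real.add_one_le_exp (h * y), mul_pos hh hy])
    (by positivity)
  have h_factor : ∀ k, SL.E (fun ω => Real.exp (h * min (X k ω) y)) ≤
      (Real.exp (c * b k) : ℝ) := by
    intro k
    calc SL.E (fun ω => Real.exp (h * min (X k ω) y))
        ≤ SL.E (fun ω => 1 + (h * X k ω + c * X k ω ^ 2)) :=
          SL.mono _ _ fun ω => Real.exp_mul_min_le hh hy
      _ ≤ SL.E (fun _ => 1) + (SL.E (fun ω => h * X k ω) + SL.E (fun ω => c * X k ω ^ 2)) :=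
          (SL.subadd (fun _ => 1) _).trans (by gcongr; exact SL.subadd _ _)
      _ = 1 + (h * SL.E (X k) + c * b k) := by
          rw [SL.const_eq, SL.pos_homog h hh.le, SL.pos_homog c hc, hb, EReal.coe_one]
      _ ≤ 1 + (0 + c * b k) := by
          gcongr
          exact EReal.mul_nonpos_iff.mpr (Or.inl ⟨by exact_mod_cast hh.le, hmean k⟩)
      _ = ((c * b k + 1 : ℝ) : EReal) := by
          rw [zero_add, add_comm]
          norm_cast
      _ ≤ (Real.exp (c * b k) : ℝ) := by exact_mod_cast Real.add_one_le_exp _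
  have h_prod : ∏ k, (SL.E fun ω => Real.exp (h * min (X k ω) y)).toReal ≤
      Real.exp (c * ∑ k, b k) := by
    rw [Finset.mul_sum, Real.exp_sum]
    refine Finset.prod_le_prod (fun k _ => EReal.toReal_nonneg (SL.E_nonneg fun ω => by positivity))
      fun k _ => ?_
    rw [← EReal.toReal_coe (Real.exp (c * b k))]
    exact EReal.toReal_le_toReal (h_factor k) (SL.E_ne_bot _) (EReal.coe_ne_top _)
  have h_dep := hX (fun _ u => Real.exp (h * min u y)) (fun _ => isBLip_exp_mul_min hh y)
    (fun _ u v huv => by dsimp only; gcongr) (fun _ u => (Real.exp_pos _).le)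
  refine SL.V_le_of_E_le (ξ := fun ω => Real.exp (-(h * x)) * ∏ k, Real.exp (h * min (X k ω) y))
    (fun ω => ?_) ?_
  · refine Set.indicator_le' (g := fun ω => Real.exp (-(h * x)) *
      ∏ k, Real.exp (h * min (X k ω) y)) (fun ω hω => ?_) (fun _ _ => by positivity) ω
    rw [← Real.exp_sum, ← Real.exp_add, ← Finset.mul_sum]
    refine Real.one_le_exp ?_
    have := mul_le_mul_of_nonneg_left (show x ≤ ∑ k, min (X k ω) y from hω) hh.le
    linarith
  · rw [SL.pos_homog _ (Real.exp_pos _).le]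
    calc (Real.exp (-(h * x)) : EReal) * SL.E (fun ω => ∏ k, Real.exp (h * min (X k ω) y))
        ≤ Real.exp (-(h * x)) * ((K * Real.exp (c * ∑ k, b k) : ℝ) : EReal) := by
          refine mul_le_mul_of_nonneg_left (h_dep.trans ?_)
            (by exact_mod_cast (Real.exp_pos _).le)
          exact_mod_cast mul_le_mul_of_nonneg_left h_prod hK
      _ = ((K * Real.exp (-(h * x) + c * ∑ k, b k) : ℝ) : EReal) := by
          rw [Real.exp_add, ← EReal.coe_mul]
          ring_nf

/-- Fuk–Nagaev type bound for sums of variables truncated at level `x / p`. -/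
lemma V_sum_min_le_rpow (SL : SublinearExp Ω) {K : ℝ} (hK : 0 ≤ K) {n : ℕ} {X : Fin n → Ω → ℝ}
    (hX : UENDFin SL K X) (hmean : ∀ k, SL.E (X k) ≤ 0) {b : Fin n → ℝ}
    (hb : ∀ k, SL.E (fun ω => (X k ω) ^ 2) = b k) (hB : 0 ≤ ∑ k, b k) {p x : ℝ} (hp : 0 < p)
    (hx : 0 < x) :
    SL.V {ω | x ≤ ∑ k, min (X k ω) (x / p)} ≤
      K * (Real.exp p * (p * (∑ k, b k) / x ^ 2) ^ p) := by
  set B := ∑ k, b k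
  have h_perturbed : ∀ B' > B, SL.V {ω | x ≤ ∑ k, min (X k ω) (x / p)} ≤
      K * (Real.exp p * (p * B' / x ^ 2) ^ p) := by
    intro B' hB'
    have hB'0 : 0 < B' := hB.trans_lt hB'
    have hy : 0 < x / p := div_pos hx hp
    set r : ℝ := x ^ 2 / (p * B') with hr
    have hr0 : 0 < r := by positivity
    have h_log : 0 < Real.log (1 + r) := Real.log_pos (by linarith)
    set h : ℝ := p * Real.log (1 + r) / x with hh_def
    have hh : 0 < h := by positivity
    refine (SL.V_sum_min_le_exp hK hX hmean hb hh hy x).trans ?_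
    refine mul_le_mul_of_nonneg_left ?_ hK
    have h_hy : h * (x / p) = Real.log (1 + r) := by rw [hh_def]; field_simp
    have h_hx : h * x = Real.log (1 + r) * p := by rw [hh_def]; field_simp
    rw [h_hy, h_hx, Real.exp_log (by linarith), add_sub_cancel_left, add_comm, Real.exp_add]
    have h_exponent : r / (x / p) ^ 2 * B ≤ p := by
      calc r / (x / p) ^ 2 * B ≤ r / (x / p) ^ 2 * B' := by gcongr
        _ = p := by rw [hr]; field_simp
    have h_decay : Real.exp (-(Real.log (1 + r) * p)) ≤ (p * B' / x ^ 2) ^ p := by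
      rw [Real.exp_neg, ← Real.rpow_def_of_pos (by linarith), ← inv_div, ← hr,
        Real.inv_rpow hr0.le]
      gcongr
      linarith
    gcongr
  have h_cont : Continuous fun B' : ℝ => K * (Real.exp p * (p * B' / x ^ 2) ^ p) := by
    refine continuous_const.mul (continuous_const.mul
      (Continuous.rpow_const (by fun_prop) fun _ => Or.inr hp.le))
  refine ge_of_tendsto ((h_cont.tendsto B).mono_left (nhdsWithin_le_nhds (s := Set.Ioi B))) ?_
  filter_upwards [self_mem_nhdsWithin] with B' hB' using h_perturbed B' hB'

end SublinearExp

lemma lintegral_min_one_le {b c : ℝ} (hb : 0 ≤ b) (hc : 0 ≤ c) :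
    ∫⁻ t in Set.Ioi (0 : ℝ), ENNReal.ofReal (min 1 (c * (b ^ 2 / t ^ 2))) ≤
      ENNReal.ofReal ((1 + c) * b) := by
  rcases hb.eq_or_lt with rfl | hb
  · simp
  rw [← Set.Ioc_union_Ioi_eq_Ioi hb.le]
  refine (lintegral_union_le _ _ _).trans ?_
  rw [add_mul, ENNReal.ofReal_add (by positivity) (by positivity)]
  gcongr
  · calc ∫⁻ t in Set.Ioc 0 b, ENNReal.ofReal (min 1 (c * (b ^ 2 / t ^ 2)))
        ≤ ∫⁻ _ in Set.Ioc 0 b, 1 := by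
          refine lintegral_mono fun t => ?_
          rw [← ENNReal.ofReal_one]
          exact ENNReal.ofReal_le_ofReal (min_le_left _ _)
      _ = ENNReal.ofReal (1 * b) := by simp
  · calc ∫⁻ t in Set.Ioi b, ENNReal.ofReal (min 1 (c * (b ^ 2 / t ^ 2)))
        ≤ ∫⁻ t in Set.Ioi b, ENNReal.ofReal (c * b ^ 2 * t ^ (-2 : ℝ)) := by
          refine setLIntegral_mono' measurableSet_Ioi fun t ht => ?_
          have ht0 : 0 < t := hb.trans ht
          refine ENNReal.ofReal_le_ofReal ((min_le_right _ _).trans_eq ?_)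
          rw [Real.rpow_neg ht0.le, Real.rpow_two]
          ring
      _ = ENNReal.ofReal (∫ t in Set.Ioi b, c * b ^ 2 * t ^ (-2 : ℝ)) := by
          refine (ofReal_integral_eq_lintegral_ofReal
            ((integrableOn_Ioi_rpow_of_lt (by norm_num) hb).const_mul _) ?_).symm
          filter_upwards [ae_restrict_mem measurableSet_Ioi] with t ht
          have ht0 : 0 < t := hb.trans ht
          positivity
      _ = ENNReal.ofReal (c * b) := by
          rw [integral_const_mul, integral_Ioi_rpow_of_lt (by norm_num) hb]
          norm_num [Real.rpow_neg_one]
          congr 1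
          field_simp

namespace SublinearExp

variable {Ω : Type}

lemma Choquet_sum_rpow_le (SL : SublinearExp Ω) {K : ℝ} (hK : 0 ≤ K) {n : ℕ}
    {X : Fin n → Ω → ℝ} (hX : UENDFin SL K X) (hmean : ∀ k, SL.E (X k) ≤ 0) {b : Fin n → ℝ}
    (hb : ∀ k, SL.E (fun ω => (X k ω) ^ 2) = b k) (hB : 0 ≤ ∑ k, b k) {p : ℝ} (hp : 0 < p) :
    SL.Choquet (fun ω => (max (∑ k, X k ω) 0) ^ p) ≤
      ENNReal.ofReal (p ^ p) * SL.Choquet (fun ω => (⨆ k, max (X k ω) 0) ^ p) +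
        ENNReal.ofReal ((1 + K * (Real.exp p * p ^ p)) * (∑ k, b k) ^ (p / 2)) := by
  set B := ∑ k, b k
  rw [← SL.lintegral_V_div _ (Real.rpow_pos_of_pos hp p)]
  refine le_trans ?_ (add_le_add le_rfl
    (lintegral_min_one_le (Real.rpow_nonneg hB (p / 2)) (by positivity)))
  have h_meas : Measurable fun t : ℝ =>
      ENNReal.ofReal (SL.V {ω | t / p ^ p ≤ (⨆ k, max (X k ω) 0) ^ p}) :=
    (SL.measurable_V_le _).comp (measurable_id.div_const _)
  rw [← lintegral_add_left h_meas]
  refine setLIntegral_mono' measurableSet_Ioi fun t ht => ?_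
  have ht0 : 0 < t := ht
  set x : ℝ := t ^ p⁻¹ with hx_def
  have hx : 0 < x := Real.rpow_pos_of_pos ht0 _
  have hxp : x ^ p = t := Real.rpow_inv_rpow ht0.le hp.ne'
  have h_cover : {ω | t ≤ (max (∑ k, X k ω) 0) ^ p} ⊆
      {ω | t / p ^ p ≤ (⨆ k, max (X k ω) 0) ^ p} ∪ {ω | x ≤ ∑ k, min (X k ω) (x / p)} := by
    intro ω hω
    rw [Set.mem_ofPred_eq, ← hxp, Real.rpow_le_rpow_iff hx.le (le_max_right _ _) hp] at hω
    have h_sum : x ≤ ∑ k, X k ω := (le_max_iff.mp hω).resolve_right (not_le.mpr hx)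
    by_cases h_large : ∃ k, x / p ≤ X k ω
    · obtain ⟨k, hk⟩ := h_large
      left
      rw [Set.mem_ofPred_eq, ← hxp, ← Real.div_rpow hx.le hp.le]
      refine Real.rpow_le_rpow (by positivity) ?_ hp.le
      exact (hk.trans (le_max_left _ _)).trans
        (le_ciSup (f := fun k => max (X k ω) 0) (Set.finite_range _).bddAbove k)
    · push Not at h_large
      right
      rw [Set.mem_ofPred_eq, Finset.sum_congr rfl fun k _ => min_eq_left (h_large k).le]
      exact h_sum
  have h_tail : SL.V {ω | x ≤ ∑ k, min (X k ω) (x / p)} ≤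
      K * (Real.exp p * p ^ p) * ((B ^ (p / 2)) ^ 2 / t ^ 2) := by
    refine (SL.V_sum_min_le_rpow hK hX hmean hb hB hp hx).trans_eq ?_
    have h_sq_t : (x ^ 2) ^ p = t ^ 2 := by
      rw [← hxp, ← Real.rpow_natCast, ← Real.rpow_natCast, ← Real.rpow_mul hx.le,
        ← Real.rpow_mul hx.le, mul_comm]
    have h_sq_B : (B ^ (p / 2)) ^ 2 = B ^ p := by
      rw [← Real.rpow_natCast, ← Real.rpow_mul hB]
      norm_num
    rw [Real.div_rpow (by positivity) (by positivity), Real.mul_rpow hp.le hB, h_sq_t, h_sq_B]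
    ring
  rw [← ENNReal.ofReal_add (SL.V_nonneg _) (le_min zero_le_one (by positivity))]
  refine ENNReal.ofReal_le_ofReal ((SL.V_mono h_cover).trans ((SL.V_union_le _ _).trans ?_))
  exact add_le_add le_rfl (le_min (SL.V_le_one _) h_tail)

end SublinearExp

/-- Theorem 3.1(c), inequality (3.4): Choquet-integral moment inequalities;
the constant `C_p` depends only on `p` and `K`. -/
theorem stmt3 (p : ℝ) (hp : 2 ≤ p) (K : ℝ) (hK : 1 ≤ K) :
    ∃ C : ℝ,
      ∀ (Ω : Type) (SL : SublinearExp Ω) (n : ℕ) (X : Fin n → Ω → ℝ),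
        SublinearExp.UENDFin SL K X →
        (∀ k, SL.E (X k) ≤ 0) →
        ∀ B : ℝ, (B : EReal) = (∑ k, SL.E fun ω => (X k ω) ^ 2) →
          SL.Choquet (fun ω => (max (∑ k, X k ω) 0) ^ p) ≤
              ENNReal.ofReal (p ^ p) *
                  SL.Choquet (fun ω => (⨆ k, max (X k ω) 0) ^ p) +
                ENNReal.ofReal (C * B ^ (p / 2)) ∧
          ENNReal.ofReal (p ^ p) *
                SL.Choquet (fun ω => (⨆ k, max (X k ω) 0) ^ p) +
              ENNReal.ofReal (C * B ^ (p / 2)) ≤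
            ENNReal.ofReal (p ^ p) *
                (∑ k, SL.Choquet fun ω => (max (X k ω) 0) ^ p) +
              ENNReal.ofReal (C * B ^ (p / 2)) := by
  refine ⟨1 + K * (Real.exp p * p ^ p), fun Ω SL n X hX hmean B hB => ⟨?_, ?_⟩⟩
  · have hp0 : 0 < p := by linarith
    have h_nonneg : ∀ k, 0 ≤ SL.E fun ω => (X k ω) ^ 2 := fun k =>
      SL.E_nonneg fun ω => sq_nonneg _
    have h_le : ∀ k, (SL.E fun ω => (X k ω) ^ 2) ≤ (B : EReal) := fun k =>
      hB ▸ Finset.single_le_sum (fun j _ => h_nonneg j) (Finset.mem_univ k)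
    have hb : ∀ k, (SL.E fun ω => (X k ω) ^ 2) =
        ((SL.E fun ω => (X k ω) ^ 2).toReal : EReal) := fun k =>
      (EReal.coe_toReal (ne_top_of_le_ne_top (EReal.coe_ne_top B) (h_le k))
        (SL.E_ne_bot _)).symm
    have h_coe_sum : ∀ b : Fin n → ℝ, ((∑ k, b k : ℝ) : EReal) = ∑ k, (b k : EReal) := fun b =>
      map_sum (⟨⟨Real.toEReal, EReal.coe_zero⟩, EReal.coe_add⟩ : ℝ →+ EReal) b Finset.univ
    have hB_eq : B = ∑ k, (SL.E fun ω => (X k ω) ^ 2).toReal := by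
      rw [Finset.sum_congr rfl fun k _ => hb k, ← h_coe_sum] at hB
      exact_mod_cast hB
    rw [hB_eq]
    exact SL.Choquet_sum_rpow_le (by linarith) hX hmean hb
      (Finset.sum_nonneg fun k _ => EReal.toReal_nonneg (h_nonneg k)) hp0
  · gcongr
    exact SL.Choquet_iSup_rpow_le X (by linarith)
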